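/- arXiv:2102.13108 — 2 statements merged into one kernel-verified Lean document; each statement's English description precedes it below -/
import Mathlib

section
/- Let C > 0 and μ₀ > 0 be real constants. Let j : ℝ³ × ℝ → ℝ³ be a smooth time-dependent vector field for which there is a compact set K ⊆ ℝ³ with supp j(·,t) ⊆ K for every t. Define the retarded vector potential A(x,t) = (μ₀/4π) ∫_{ℝ³} j(y, t − |x−y|/C)/|x−y| dy. Then A is twice differentiable and satisfies the inhomogeneous wave equation Δ_x A(x,t) − (1/C²) ∂²A/∂t²(x,t) = −μ₀ j(x,t) for all (x,t) ∈ ℝ³ × ℝ. -/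
noncomputable section

open MeasureTheory Real

abbrev V3 := Fin 3 → ℝ

def dot3 (a b : V3) : ℝ := ∑ i, a i * b i

def norm3 (a : V3) : ℝ := Real.sqrt (dot3 a a)

def cross3 (a b : V3) : V3 :=
  ![a 1 * b 2 - a 2 * b 1, a 2 * b 0 - a 0 * b 2, a 0 * b 1 - a 1 * b 0]

/-- Spatial partial derivative in direction `i` of a time-dependent field. -/
def pdS {F : Type*} [NormedAddCommGroup F] [NormedSpace ℝ F]
    (i : Fin 3) (f : V3 × ℝ → F) (p : V3 × ℝ) : F :=
  fderiv ℝ (fun y => f (y, p.2)) p.1 (Pi.single i 1)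

/-- Partial time derivative of a time-dependent field. -/
def pdT {F : Type*} [NormedAddCommGroup F] [NormedSpace ℝ F]
    (f : V3 × ℝ → F) (p : V3 × ℝ) : F :=
  deriv (fun s => f (p.1, s)) p.2

/-- Spatial gradient. -/
def grad (f : V3 × ℝ → ℝ) (p : V3 × ℝ) : V3 := fun i => pdS i f p

/-- Spatial divergence. -/
def divg (A : V3 × ℝ → V3) (p : V3 × ℝ) : ℝ := ∑ i, pdS i (fun q => A q i) p

/-- Spatial curl. -/
def curl (A : V3 × ℝ → V3) (p : V3 × ℝ) : V3 :=
  ![pdS 1 (fun q => A q 2) p - pdS 2 (fun q => A q 1) p,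
    pdS 2 (fun q => A q 0) p - pdS 0 (fun q => A q 2) p,
    pdS 0 (fun q => A q 1) p - pdS 1 (fun q => A q 0) p]

/-- Spatial Laplacian (componentwise for vector-valued fields). -/
def lap {F : Type*} [NormedAddCommGroup F] [NormedSpace ℝ F]
    (f : V3 × ℝ → F) (p : V3 × ℝ) : F :=
  ∑ i, pdS i (pdS i f) p

/-- Spatial directional derivative `(a·∇)f`. -/
def dirS {F : Type*} [NormedAddCommGroup F] [NormedSpace ℝ F]
    (a : V3) (f : V3 × ℝ → F) (p : V3 × ℝ) : F :=
  fderiv ℝ (fun y => f (y, p.2)) p.1 a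


/-- The retarded vector potential `A(x,t) = (μ₀/4π) ∫ j(y, t − |x−y|/C)/|x−y| dy`. -/
def Aret (C μ₀ : ℝ) (j : V3 × ℝ → V3) (p : V3 × ℝ) : V3 :=
  (μ₀ / (4 * π)) • ∫ y : V3, (norm3 (p.1 - y))⁻¹ • j (y, p.2 - norm3 (p.1 - y) / C)

/-!
The retarded potential is a convolution in space in which the displacement `z` delays the source by
`|z| / C`. Its integrand depends on the base point only through the source, so it is as smooth as
the source and commutes with the wave operator; it remains to evaluate it at the image of the source
under the wave operator. Smooth the distance to `s = √(|z|² + ε²)`. By the divergence theorem, the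
delayed convolution of `1 / s` with the image of `v` then equals minus the integral of
`ε² (3 s⁻⁵ v + 3 c s⁻⁴ ∂ₜv + c² s⁻³ ∂ₜ²v)` at the retarded argument, where `c = 1 / C`. As `ε → 0`,
the kernel `3 ε² s⁻⁵` concentrates at the origin with total mass `4π`, while `ε² s⁻⁴` and `ε² s⁻³`
are dominated by `|z|⁻²` and `|z|⁻¹` and tend to `0` pointwise.
-/

open Filter Topology Set

section Source

variable {X E : Type*} [NormedAddCommGroup X] [NormedSpace ℝ X] [NormedAddCommGroup E]
  [NormedSpace ℝ E] {m n : WithTop ℕ∞} {v w : X × ℝ → E}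

/-- A source of class `C^n`: a time-dependent field which is `C^n` on spacetime and vanishes, at
all times, outside a compact region of space. -/
structure IsSource (n : WithTop ℕ∞) (v : X × ℝ → E) : Prop where
  contDiff : ContDiff ℝ n v
  exists_isCompact : ∃ K : Set X, IsCompact K ∧ ∀ x ∉ K, ∀ t, v (x, t) = 0

namespace IsSource

lemma of_le (hv : IsSource n v) (hmn : m ≤ n) : IsSource m v :=
  ⟨hv.contDiff.of_le hmn, hv.exists_isCompact⟩

protected lemma continuous (hv : IsSource n v) : Continuous v := hv.contDiff.continuous

protected lemma const_smul (c : ℝ) (hv : IsSource n v) : IsSource n (fun q => c • v q) := by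
  obtain ⟨K, hK, hvK⟩ := hv.exists_isCompact
  exact ⟨hv.contDiff.const_smul c, K, hK, fun x hx t => by simp [hvK x hx t]⟩

protected lemma add (hv : IsSource n v) (hw : IsSource n w) :
    IsSource n (fun q => v q + w q) := by
  obtain ⟨K, hK, hvK⟩ := hv.exists_isCompact
  obtain ⟨L, hL, hwL⟩ := hw.exists_isCompact
  refine ⟨hv.contDiff.add hw.contDiff, K ∪ L, hK.union hL, fun x hx t => ?_⟩
  rw [mem_union, not_or] at hx
  simp [hvK x hx.1 t, hwL x hx.2 t]

protected lemma fderiv (hv : IsSource n v) (hmn : m + 1 ≤ n) : IsSource m (fderiv ℝ v) := by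
  obtain ⟨K, hK, hvK⟩ := hv.exists_isCompact
  refine ⟨hv.contDiff.fderiv_right hmn, K, hK, fun x hx t => ?_⟩
  have hv0 : v =ᶠ[𝓝 (x, t)] fun _ => 0 := by
    filter_upwards [(hK.isClosed.isOpen_compl.preimage continuous_fst).mem_nhds hx] with q hq
    exact hvK q.1 hq q.2
  simp [hv0.fderiv_eq]

protected lemma fderiv_apply (hv : IsSource n v) (hmn : m + 1 ≤ n) (a : X × ℝ) :
    IsSource m (fun q => fderiv ℝ v q a) := by
  obtain ⟨K, hK, hvK⟩ := (hv.fderiv hmn).exists_isCompact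
  exact ⟨(hv.fderiv hmn).contDiff.clm_apply contDiff_const, K, hK,
    fun x hx t => by simp [hvK x hx t]⟩

/-- The bound is uniform over compact families of base points and delays, since the retarded
arguments that meet the support then stay in a compact region of spacetime. -/
lemma exists_norm_le_indicator (hv : IsSource n v) {Λ : Type*} [TopologicalSpace Λ] {S : Set Λ}
    (hS : IsCompact S) {p : Λ → X × ℝ} (hp : Continuous p) {τ : Λ → X → ℝ}
    (hτ : Continuous fun a : Λ × X => τ a.1 a.2) :
    ∃ M, 0 ≤ M ∧ ∃ B : Set X, IsCompact B ∧
      ∀ l ∈ S, ∀ z, ‖v (p l - (z, τ l z))‖ ≤ B.indicator (fun _ => M) z := by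
  obtain ⟨K, hK, hvK⟩ := hv.exists_isCompact
  set B : Set X := (fun a : Λ × X => (p a.1).1 - a.2) '' S ×ˢ K
  have hB : IsCompact B := (hS.prod hK).image (by fun_prop)
  have hcont : Continuous fun a : Λ × X => v (p a.1 - (a.2, τ a.1 a.2)) :=
    hv.continuous.comp ((hp.comp continuous_fst).sub (continuous_snd.prodMk hτ))
  obtain ⟨M, hM⟩ := (hS.prod hB).exists_bound_of_continuousOn hcont.continuousOn
  refine ⟨|M|, abs_nonneg M, B, hB, fun l hl z => ?_⟩
  by_cases hz : z ∈ B
  · rw [indicator_of_mem hz]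
    exact (hM (l, z) ⟨hl, hz⟩).trans (le_abs_self M)
  · have hnot : (p l).1 - z ∉ K := fun h => hz ⟨(l, (p l).1 - z), ⟨hl, h⟩, sub_sub_cancel _ _⟩
    rw [indicator_of_notMem hz]
    exact (norm_eq_zero.2 (hvK _ hnot _)).le

end IsSource

end Source

section DelayedConvolution

variable {X E : Type*} [NormedAddCommGroup X] [NormedAddCommGroup E] [NormedSpace ℝ E]
  [MeasurableSpace X] {μ : Measure X} {k τ : X → ℝ} {v w : X × ℝ → E}

/-- The convolution in space of a time-dependent field `v` with the kernel `k`, where the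
contribution of the displacement `z` is delayed in time by `τ z`. -/
def delayedConvolution (μ : Measure X) (k τ : X → ℝ) (v : X × ℝ → E) (p : X × ℝ) : E :=
  ∫ z, k z • v (p - (z, τ z)) ∂μ

lemma delayedConvolution_const_smul (c : ℝ) (p : X × ℝ) :
    delayedConvolution μ k τ (fun q => c • v q) p = c • delayedConvolution μ k τ v p := by
  simp only [delayedConvolution, smul_comm _ c, integral_smul]

lemma locallyIntegrable_norm (hk : LocallyIntegrable k μ) : LocallyIntegrable (fun z => ‖k z‖) μ :=
  locallyIntegrableOn_univ.1 (locallyIntegrableOn_univ.2 hk).norm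

variable [NormedSpace ℝ X] [BorelSpace X]

namespace IsSource

lemma exists_integrable_bound {n : WithTop ℕ∞} (hv : IsSource n v) {Λ : Type*}
    [TopologicalSpace Λ] {S : Set Λ} (hS : IsCompact S) {p : Λ → X × ℝ} (hp : Continuous p)
    {τ : Λ → X → ℝ} (hτ : Continuous fun a : Λ × X => τ a.1 a.2) {g : X → ℝ}
    (hg : LocallyIntegrable g μ) :
    ∃ bound : X → ℝ, Integrable bound μ ∧ ∀ l ∈ S, ∀ z (a : ℝ), ‖a‖ ≤ g z →
      ‖a • v (p l - (z, τ l z))‖ ≤ bound z := by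
  obtain ⟨M, -, B, hB, hbound⟩ := hv.exists_norm_le_indicator hS hp hτ
  refine ⟨B.indicator fun z => g z * M, (integrable_indicator_iff hB.measurableSet).2
    ((hg.integrableOn_isCompact hB).mul_const M), fun l hl z a ha => ?_⟩
  calc ‖a • v (p l - (z, τ l z))‖ = ‖a‖ * ‖v (p l - (z, τ l z))‖ := norm_smul _ _
    _ ≤ g z * B.indicator (fun _ => M) z := by
      gcongr
      · exact (norm_nonneg _).trans ha
      · exact hbound l hl z
    _ = B.indicator (fun z => g z * M) z :=
      (indicator_mul_right B g fun _ => M).symm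

variable [FiniteDimensional ℝ X]

lemma aestronglyMeasurable_delayed {n : WithTop ℕ∞} (hv : IsSource n v)
    (hk : AEStronglyMeasurable k μ) (hτ : Continuous τ) (p : X × ℝ) :
    AEStronglyMeasurable (fun z => k z • v (p - (z, τ z))) μ :=
  hk.smul (hv.continuous.comp
    (continuous_const.sub (continuous_id.prodMk hτ))).aestronglyMeasurable

theorem tendsto_delayedConvolution {n : WithTop ℕ∞} (hv : IsSource n v) {Λ : Type*}
    [TopologicalSpace Λ] [WeaklyLocallyCompactSpace Λ] {l₀ : Λ} {F : Filter Λ}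
    [F.IsCountablyGenerated] (hF : F ≤ 𝓝 l₀) {p : Λ → X × ℝ} (hp : Continuous p) {τ : Λ → X → ℝ}
    (hτ : Continuous fun a : Λ × X => τ a.1 a.2) {k : Λ → X → ℝ} {k₀ g : X → ℝ}
    (hk : ∀ l, AEStronglyMeasurable (k l) μ) (hg : LocallyIntegrable g μ)
    (hkg : ∀ᶠ l in F, ∀ᵐ z ∂μ, ‖k l z‖ ≤ g z)
    (hk₀ : ∀ᵐ z ∂μ, Tendsto (fun l => k l z) F (𝓝 (k₀ z))) :
    Tendsto (fun l => delayedConvolution μ (k l) (τ l) v (p l)) F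
      (𝓝 (delayedConvolution μ k₀ (τ l₀) v (p l₀))) := by
  obtain ⟨S, hS, hSl₀⟩ := exists_compact_mem_nhds l₀
  obtain ⟨bound, hbound, hle⟩ := hv.exists_integrable_bound hS hp hτ hg
  refine tendsto_integral_filter_of_dominated_convergence bound (Eventually.of_forall fun l =>
    hv.aestronglyMeasurable_delayed (hk l) (hτ.comp (.prodMk_right l)) _) ?_ hbound ?_
  · filter_upwards [hkg, hF hSl₀] with l hkgl hlS
    filter_upwards [hkgl] with z hz using hle l hlS z _ hz
  · filter_upwards [hk₀] with z hz
    have hcont : Continuous fun l => v (p l - (z, τ l z)) :=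
      hv.continuous.comp (hp.sub (continuous_const.prodMk (hτ.comp (.prodMk_left z))))
    exact hz.smul ((hcont.tendsto l₀).mono_left hF)

lemma integrable_delayed {n : WithTop ℕ∞} (hv : IsSource n v)
    (hk : LocallyIntegrable k μ) (hτ : Continuous τ) (p : X × ℝ) :
    Integrable (fun z => k z • v (p - (z, τ z))) μ := by
  obtain ⟨bound, hbound, hle⟩ := hv.exists_integrable_bound (isCompact_singleton (x := p))
    continuous_id (τ := fun _ => τ) (hτ.comp continuous_snd) (locallyIntegrable_norm hk)
  exact hbound.mono' (hv.aestronglyMeasurable_delayed hk.aestronglyMeasurable hτ p)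
    (Eventually.of_forall fun z => hle p rfl z _ le_rfl)

theorem hasFDerivAt_delayedConvolution (hv : IsSource 1 v)
    (hk : LocallyIntegrable k μ) (hτ : Continuous τ) (p : X × ℝ) :
    HasFDerivAt (delayedConvolution μ k τ v) (delayedConvolution μ k τ (fderiv ℝ v) p) p := by
  have hv' : IsSource 0 (fderiv ℝ v) := hv.fderiv (by simp)
  obtain ⟨bound, hbound, hle⟩ := hv'.exists_integrable_bound
    (isCompact_closedBall p 1) continuous_id (τ := fun _ => τ) (hτ.comp continuous_snd)
    (locallyIntegrable_norm hk)
  refine hasFDerivAt_integral_of_dominated_of_fderiv_le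
    (F' := fun q z => k z • fderiv ℝ v (q - (z, τ z)))
    (Metric.closedBall_mem_nhds p one_pos)
    (Eventually.of_forall fun q => hv.aestronglyMeasurable_delayed hk.aestronglyMeasurable hτ q)
    (hv.integrable_delayed hk hτ p)
    (hv'.aestronglyMeasurable_delayed hk.aestronglyMeasurable hτ p)
    (Eventually.of_forall fun z q hq => hle q hq z _ le_rfl) hbound
    (Eventually.of_forall fun z q _ => ?_)
  have hvq := (hv.contDiff.differentiable one_ne_zero (q - (z, τ z))).hasFDerivAt
  exact (hvq.comp q ((hasFDerivAt_id q).sub_const (z, τ z))).const_smul (k z)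

lemma fderiv_delayedConvolution_apply (hv : IsSource 1 v) (hk : LocallyIntegrable k μ)
    (hτ : Continuous τ) (p a : X × ℝ) :
    fderiv ℝ (delayedConvolution μ k τ v) p a =
      delayedConvolution μ k τ (fun q => fderiv ℝ v q a) p := by
  rw [(hv.hasFDerivAt_delayedConvolution hk hτ p).fderiv, delayedConvolution,
    ContinuousLinearMap.integral_apply
      ((hv.fderiv (m := 0) (by simp)).integrable_delayed hk hτ p)]
  rfl

theorem contDiff_delayedConvolution {n : ℕ∞} (hv : IsSource n v)
    (hk : LocallyIntegrable k μ) (hτ : Continuous τ) :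
    ContDiff ℝ n (delayedConvolution μ k τ v) := by
  refine contDiff_iff_forall_nat_le.2 fun m hm => ?_
  replace hv : IsSource m v := hv.of_le (mod_cast hm)
  clear hm
  induction m generalizing v with
  | zero =>
    refine contDiff_zero.2 (continuous_iff_continuousAt.2 fun p => ?_)
    exact hv.tendsto_delayedConvolution le_rfl continuous_id (τ := fun _ => τ)
      (hτ.comp continuous_snd) (fun _ => hk.aestronglyMeasurable) (locallyIntegrable_norm hk)
      (Eventually.of_forall fun _ => Eventually.of_forall fun _ => le_rfl)
      (Eventually.of_forall fun _ => tendsto_const_nhds)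
  | succ m ih =>
    have hv1 : IsSource 1 v := hv.of_le (by simp)
    push_cast at hv ⊢
    refine contDiff_succ_iff_fderiv_apply.2
      ⟨fun p => (hv1.hasFDerivAt_delayedConvolution hk hτ p).differentiableAt, by simp,
        fun a => ?_⟩
    simp only [fderiv_delayedConvolution_apply hv1 hk hτ]
    exact ih (hv.fderiv_apply le_rfl a)

end IsSource

lemma delayedConvolution_add [FiniteDimensional ℝ X] {m n : WithTop ℕ∞} (hv : IsSource m v)
    (hw : IsSource n w) (hk : LocallyIntegrable k μ) (hτ : Continuous τ) (p : X × ℝ) :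
    delayedConvolution μ k τ (fun q => v q + w q) p =
      delayedConvolution μ k τ v p + delayedConvolution μ k τ w p := by
  simp only [delayedConvolution, smul_add]
  exact integral_add (hv.integrable_delayed hk hτ p) (hw.integrable_delayed hk hτ p)

end DelayedConvolution

section SoftNorm

/-- The Euclidean norm smoothed at scale `ε`, which is a smooth function of `z` for `ε ≠ 0` and the
Euclidean norm for `ε = 0`. -/
def softNorm (ε : ℝ) (z : V3) : ℝ := √(dot3 z z + ε ^ 2)

lemma dot3_self (z : V3) : dot3 z z = z 0 ^ 2 + z 1 ^ 2 + z 2 ^ 2 := by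
  simp only [dot3, Fin.sum_univ_three, sq]

lemma dot3_self_nonneg (z : V3) : 0 ≤ dot3 z z := by
  rw [dot3_self]
  positivity

lemma softNorm_zero (z : V3) : softNorm 0 z = norm3 z := by
  simp [softNorm, norm3]

lemma softNorm_sq (ε : ℝ) (z : V3) : softNorm ε z ^ 2 = dot3 z z + ε ^ 2 :=
  sq_sqrt (add_nonneg (dot3_self_nonneg z) (sq_nonneg ε))

lemma softNorm_pos {ε : ℝ} (hε : 0 < ε) (z : V3) : 0 < softNorm ε z :=
  sqrt_pos.2 (add_pos_of_nonneg_of_pos (dot3_self_nonneg z) (pow_pos hε 2))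

lemma le_softNorm (ε : ℝ) (z : V3) : ε ≤ softNorm ε z :=
  le_sqrt_of_sq_le (le_add_of_nonneg_left (dot3_self_nonneg z))

lemma norm3_le_softNorm (ε : ℝ) (z : V3) : norm3 z ≤ softNorm ε z :=
  sqrt_le_sqrt (le_add_of_nonneg_right (sq_nonneg ε))

lemma norm_le_norm3 (z : V3) : ‖z‖ ≤ norm3 z := by
  refine (pi_norm_le_iff_of_nonneg (sqrt_nonneg _)).2 fun i => abs_le_sqrt ?_
  rw [dot3, sq]
  exact Finset.single_le_sum (f := fun i => z i * z i) (fun i _ => mul_self_nonneg (z i))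
    (Finset.mem_univ i)

lemma norm3_pos {z : V3} (hz : z ≠ 0) : 0 < norm3 z :=
  (norm_pos_iff.2 hz).trans_le (norm_le_norm3 z)

lemma continuous_uncurry_softNorm : Continuous fun a : ℝ × V3 => softNorm a.1 a.2 := by
  unfold softNorm dot3
  fun_prop

lemma continuous_softNorm (ε : ℝ) : Continuous (softNorm ε) :=
  continuous_uncurry_softNorm.comp (.prodMk_right ε)

lemma continuous_norm3 : Continuous norm3 := by
  unfold norm3 dot3
  fun_prop

lemma softNorm_smul {ε : ℝ} (hε : 0 ≤ ε) (w : V3) : softNorm ε (ε • w) = ε * softNorm 1 w := by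
  have h : dot3 (ε • w) (ε • w) + ε ^ 2 = ε ^ 2 * (dot3 w w + 1 ^ 2) := by
    simp only [dot3_self, Pi.smul_apply, smul_eq_mul]
    ring
  rw [softNorm, h, sqrt_mul (sq_nonneg ε), sqrt_sq hε, softNorm]

lemma inv_softNorm_le_inv_norm3 (ε : ℝ) {z : V3} (hz : z ≠ 0) :
    (softNorm ε z)⁻¹ ≤ (norm3 z)⁻¹ :=
  inv_anti₀ (norm3_pos hz) (norm3_le_softNorm ε z)

lemma ae_ne_zero : ∀ᵐ z : V3, z ≠ 0 :=
  compl_mem_ae_iff.2 (measure_singleton 0)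

lemma locallyIntegrable_inv_norm3_pow {m : ℕ} (hm : m < 3) :
    LocallyIntegrable fun z => (norm3 z)⁻¹ ^ m := by
  refine locallyIntegrable_of_norm_le_rpow (C := 1) (α := m) (by simp) (by simpa using hm) ?_
    (continuous_norm3.measurable.inv.pow_const m).aestronglyMeasurable
  filter_upwards [ae_ne_zero] with z hz
  have hz' := norm_pos_iff.2 hz
  rw [norm_of_nonneg (pow_nonneg (inv_nonneg.2 (norm3_pos hz).le) m), one_mul, rpow_neg hz'.le,
    rpow_natCast, ← inv_pow]
  exact pow_le_pow_left₀ (inv_nonneg.2 (norm3_pos hz).le) (inv_anti₀ hz' (norm_le_norm3 z)) m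

lemma continuous_inv_softNorm_pow {ε : ℝ} (hε : 0 < ε) (m : ℕ) :
    Continuous fun z => (softNorm ε z)⁻¹ ^ m :=
  ((continuous_softNorm ε).inv₀ fun z => (softNorm_pos hε z).ne').pow m

lemma hasDerivAt_div_sqrt_sq_add_one_cube (y : ℝ) :
    HasDerivAt (fun y : ℝ => (y / √(y ^ 2 + 1)) ^ 3 / 3) (y ^ 2 * (√(y ^ 2 + 1))⁻¹ ^ 5) y := by
  have hpos : 0 < √(y ^ 2 + 1) := sqrt_pos.2 (by positivity)
  have hsq : √(y ^ 2 + 1) ^ 2 = y ^ 2 + 1 := sq_sqrt (by positivity)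
  have hsqrt := ((hasDerivAt_pow 2 y).add_const 1).sqrt (by positivity : y ^ 2 + 1 ≠ 0)
  refine ((((hasDerivAt_id y).div hsqrt hpos.ne').pow 3).div_const 3).congr_deriv ?_
  simp only [id, Pi.div_apply]
  set s := √(y ^ 2 + 1)
  norm_num
  field_simp
  linear_combination y ^ 2 * hsq

lemma tendsto_div_sqrt_sq_add_one_atTop :
    Tendsto (fun y : ℝ => y / √(y ^ 2 + 1)) atTop (𝓝 1) := by
  have hinv : Tendsto (fun y : ℝ => (y ^ 2 + 1)⁻¹) atTop (𝓝 0) :=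
    (tendsto_atTop_add_const_right _ 1 (tendsto_pow_atTop two_ne_zero)).inv_tendsto_atTop
  have hsqrt : Tendsto (fun y : ℝ => √(1 - (y ^ 2 + 1)⁻¹)) atTop (𝓝 1) := by
    simpa using (hinv.const_sub 1).sqrt
  refine hsqrt.congr' ?_
  filter_upwards [eventually_ge_atTop 0] with y hy
  have h : 1 - (y ^ 2 + 1)⁻¹ = y ^ 2 / (y ^ 2 + 1) := by
    field_simp
    ring
  rw [h, sqrt_div (sq_nonneg y), sqrt_sq hy]

lemma integral_Ioi_sq_mul_inv_sqrt_sq_add_one_pow_five :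
    ∫ y in Ioi (0 : ℝ), y ^ 2 * (√(y ^ 2 + 1))⁻¹ ^ 5 = 1 / 3 := by
  have hlim := (tendsto_div_sqrt_sq_add_one_atTop.pow 3).div_const 3
  rw [integral_Ioi_of_hasDerivAt_of_nonneg' (fun y _ => hasDerivAt_div_sqrt_sq_add_one_cube y)
    (fun y _ => by positivity) hlim]
  simp

lemma integral_inv_softNorm_one_pow_five : ∫ w : V3, (softNorm 1 w)⁻¹ ^ 5 = 4 * π / 3 := by
  let radial : ℝ → ℝ := fun r => (√(r ^ 2 + 1))⁻¹ ^ 5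
  have hradial (w : V3) : (softNorm 1 w)⁻¹ ^ 5 = radial ‖WithLp.toLp 2 w‖ := by
    simp [radial, softNorm, EuclideanSpace.norm_sq_eq, dot3_self, Fin.sum_univ_three]
  calc ∫ w : V3, (softNorm 1 w)⁻¹ ^ 5 = ∫ w : V3, radial ‖WithLp.toLp 2 w‖ := by
        simp only [hradial]
    _ = ∫ x : EuclideanSpace ℝ (Fin 3), radial ‖x‖ :=
        (PiLp.volume_preserving_toLp (Fin 3)).integral_comp
          (MeasurableEquiv.toLp 2 _).measurableEmbedding fun x => radial ‖x‖
    _ = 4 * π / 3 := by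
        rw [integral_fun_norm_addHaar]
        simp only [finrank_euclideanSpace, Fintype.card_fin, smul_eq_mul, Nat.add_one_sub_one,
          Measure.real, EuclideanSpace.volume_ball_fin_three, radial,
          integral_Ioi_sq_mul_inv_sqrt_sq_add_one_pow_five]
        simp [ENNReal.toReal_ofReal (show 0 ≤ π * 4 / 3 by positivity)]
        ring

lemma integrable_inv_softNorm_one_pow_five : Integrable fun w : V3 => (softNorm 1 w)⁻¹ ^ 5 :=
  .of_integral_ne_zero (by rw [integral_inv_softNorm_one_pow_five]; positivity)

end SoftNorm

section PartialDerivatives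

variable {E : Type*} [NormedAddCommGroup E] [NormedSpace ℝ E] {m n : WithTop ℕ∞} {v : V3 × ℝ → E}

lemma pdS_eq_fderiv (hv : Differentiable ℝ v) (i : Fin 3) :
    pdS i v = fun p => fderiv ℝ v p (Pi.single i 1, 0) := by
  funext p
  have h : HasFDerivAt (fun y => v (y, p.2))
      (fderiv ℝ v p ∘L ContinuousLinearMap.inl ℝ V3 ℝ) p.1 :=
    (hv p).hasFDerivAt.comp p.1 (hasFDerivAt_prodMk_left p.1 p.2)
  rw [pdS, h.fderiv]
  simp

lemma pdT_eq_fderiv (hv : Differentiable ℝ v) : pdT v = fun p => fderiv ℝ v p (0, 1) := by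
  funext p
  exact ((hv p).hasFDerivAt.comp_hasDerivAt p.2
    ((hasDerivAt_const p.2 p.1).prodMk (hasDerivAt_id p.2))).deriv

lemma pdS_pdT_comm (hv : ContDiff ℝ 2 v) (i : Fin 3) : pdS i (pdT v) = pdT (pdS i v) := by
  have hd : Differentiable ℝ (fderiv ℝ v) :=
    (hv.fderiv_right (m := 1) (by norm_num)).differentiable one_ne_zero
  have hv1 := hv.differentiable two_ne_zero
  rw [pdT_eq_fderiv hv1, pdS_eq_fderiv hv1, pdS_eq_fderiv (hd.clm_apply (by fun_prop)),
    pdT_eq_fderiv (hd.clm_apply (by fun_prop))]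
  funext p
  have hsymm : IsSymmSndFDerivAt ℝ v p := hv.contDiffAt.isSymmSndFDerivAt (by simp)
  simp [fderiv_clm_apply (hd p) (differentiableAt_const _), hsymm.eq (Pi.single i 1, 0)]

namespace IsSource

protected lemma differentiable (hv : IsSource n v) (hn : 1 ≤ n) : Differentiable ℝ v :=
  hv.contDiff.differentiable (one_pos.trans_le hn).ne'

protected lemma pdS (hv : IsSource n v) (hmn : m + 1 ≤ n) (i : Fin 3) : IsSource m (pdS i v) := by
  rw [pdS_eq_fderiv (hv.differentiable (le_add_self.trans hmn))]
  exact hv.fderiv_apply hmn _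

protected lemma pdT (hv : IsSource n v) (hmn : m + 1 ≤ n) : IsSource m (pdT v) := by
  rw [pdT_eq_fderiv (hv.differentiable (le_add_self.trans hmn))]
  exact hv.fderiv_apply hmn _

end IsSource

/-- The d'Alembertian `Δ - c² ∂²/∂t²` for waves of slowness (inverse speed) `c`. -/
def waveOperator (c : ℝ) (v : V3 × ℝ → E) (p : V3 × ℝ) : E :=
  lap v p - c ^ 2 • pdT (pdT v) p

lemma waveOperator_eq (c : ℝ) (v : V3 × ℝ → E) :
    waveOperator c v = fun q =>
      pdS 0 (pdS 0 v) q + pdS 1 (pdS 1 v) q + pdS 2 (pdS 2 v) q + (-c ^ 2) • pdT (pdT v) q := by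
  funext q
  simp only [waveOperator, lap, Fin.sum_univ_three, neg_smul, sub_eq_add_neg]

protected lemma IsSource.waveOperator (hv : IsSource n v) (hmn : m + 1 + 1 ≤ n) (c : ℝ) :
    IsSource m (waveOperator c v) := by
  have hSS (i : Fin 3) : IsSource m (pdS i (pdS i v)) := (hv.pdS hmn i).pdS le_rfl i
  rw [waveOperator_eq]
  exact (((hSS 0).add (hSS 1)).add (hSS 2)).add (((hv.pdT hmn).pdT le_rfl).const_smul _)

section DelayedConvolution

variable {k τ : V3 → ℝ}

lemma pdS_delayedConvolution (hv : IsSource 1 v) (hk : LocallyIntegrable k) (hτ : Continuous τ)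
    (i : Fin 3) :
    pdS i (delayedConvolution volume k τ v) = delayedConvolution volume k τ (pdS i v) := by
  funext p
  rw [pdS_eq_fderiv (hv.differentiable le_rfl), pdS_eq_fderiv fun q =>
    (hv.hasFDerivAt_delayedConvolution hk hτ q).differentiableAt]
  exact hv.fderiv_delayedConvolution_apply hk hτ p _

lemma pdT_delayedConvolution (hv : IsSource 1 v) (hk : LocallyIntegrable k) (hτ : Continuous τ) :
    pdT (delayedConvolution volume k τ v) = delayedConvolution volume k τ (pdT v) := by
  funext p
  rw [pdT_eq_fderiv (hv.differentiable le_rfl), pdT_eq_fderiv fun q =>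
    (hv.hasFDerivAt_delayedConvolution hk hτ q).differentiableAt]
  exact hv.fderiv_delayedConvolution_apply hk hτ p _

theorem waveOperator_delayedConvolution (c : ℝ) (hv : IsSource 2 v) (hk : LocallyIntegrable k)
    (hτ : Continuous τ) (p : V3 × ℝ) :
    waveOperator c (delayedConvolution volume k τ v) p =
      delayedConvolution volume k τ (waveOperator c v) p := by
  have hv1 : IsSource 1 v := hv.of_le one_le_two
  have hS (i : Fin 3) : IsSource 1 (pdS i v) := hv.pdS (by norm_num) i
  have hSS (i : Fin 3) : IsSource 0 (pdS i (pdS i v)) := (hS i).pdS (by simp) i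
  have hT : IsSource 1 (pdT v) := hv.pdT (by norm_num)
  have hTT : IsSource 0 (pdT (pdT v)) := hT.pdT (by simp)
  rw [waveOperator_eq, waveOperator_eq]
  simp only [pdS_delayedConvolution, pdT_delayedConvolution, hv1, hS, hT, hk, hτ]
  rw [delayedConvolution_add (((hSS 0).add (hSS 1)).add (hSS 2)) (hTT.const_smul _) hk hτ,
    delayedConvolution_add ((hSS 0).add (hSS 1)) (hSS 2) hk hτ,
    delayedConvolution_add (hSS 0) (hSS 1) hk hτ, delayedConvolution_const_smul]

end DelayedConvolution

end PartialDerivatives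

section RetardedFlux

lemma hasLineDerivAt_coord (i : Fin 3) (z : V3) :
    HasLineDerivAt ℝ (fun z : V3 => z i) 1 z (Pi.single i 1) :=
  (((hasDerivAt_id (0 : ℝ)).const_add (z i)).congr_deriv rfl).congr_of_eventuallyEq
    (Eventually.of_forall fun t => by simp)

lemma hasLineDerivAt_softNorm {ε : ℝ} (hε : 0 < ε) (i : Fin 3) (z : V3) :
    HasLineDerivAt ℝ (softNorm ε) (z i * (softNorm ε z)⁻¹) z (Pi.single i 1) := by
  have hexpand (t : ℝ) : softNorm ε (z + t • Pi.single i 1) =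
      √(softNorm ε z ^ 2 + (2 * z i * t + t ^ 2)) := by
    rw [softNorm_sq, softNorm]
    congr 1
    fin_cases i <;> simp [dot3_self] <;> ring
  have hlin : HasDerivAt (fun t : ℝ => softNorm ε z ^ 2 + (2 * z i * t + t ^ 2)) (2 * z i) 0 := by
    simpa using (((hasDerivAt_id (0 : ℝ)).const_mul (2 * z i)).add
      (hasDerivAt_pow 2 (0 : ℝ))).const_add (softNorm ε z ^ 2)
  have hpos := softNorm_pos hε z
  simp only [HasLineDerivAt, hexpand]
  refine (hlin.sqrt (by simp [hpos.ne'])).congr_deriv ?_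
  simp [sqrt_sq hpos.le, field]

lemma hasLineDerivAt_inv_softNorm_pow {ε : ℝ} (hε : 0 < ε) (m : ℕ) (i : Fin 3) (z : V3) :
    HasLineDerivAt ℝ (fun z => (softNorm ε z)⁻¹ ^ m) (-(m * z i * (softNorm ε z)⁻¹ ^ (m + 2))) z
      (Pi.single i 1) := by
  have hs := (softNorm_pos hε z).ne'
  refine ((HasDerivAt.fun_inv (hasLineDerivAt_softNorm hε i z) (by simpa using hs)).fun_pow
    m).congr_deriv ?_
  cases m
  · simp
  · simp [field]
    ring

variable {E : Type*} [NormedAddCommGroup E] [NormedSpace ℝ E]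

lemma hasLineDerivAt_smul {X : Type*} [NormedAddCommGroup X] [NormedSpace ℝ X] {k : X → ℝ}
    {k' : ℝ} {f : X → E} {f' : E} {z e : X} (hk : HasLineDerivAt ℝ k k' z e)
    (hf : HasLineDerivAt ℝ f f' z e) :
    HasLineDerivAt ℝ (fun z => k z • f z) (k z • f' + k' • f z) z e :=
  (HasDerivAt.fun_smul hk hf).congr_deriv (by simp)

lemma hasLineDerivAt_coord_mul_inv_softNorm_pow {ε : ℝ} (hε : 0 < ε) (m : ℕ)
    (i : Fin 3) (z : V3) :
    HasLineDerivAt ℝ (fun z => z i * (softNorm ε z)⁻¹ ^ m)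
      ((softNorm ε z)⁻¹ ^ m - m * z i ^ 2 * (softNorm ε z)⁻¹ ^ (m + 2)) z (Pi.single i 1) :=
  (hasLineDerivAt_smul (hasLineDerivAt_coord i z)
    (hasLineDerivAt_inv_softNorm_pow hε m i z)).congr_deriv
      (by simp only [smul_eq_mul]; ring)

lemma integral_eq_zero_of_hasLineDerivAt {X : Type*} [NormedAddCommGroup X] [NormedSpace ℝ X]
    [FiniteDimensional ℝ X] [MeasurableSpace X] [BorelSpace X] {μ : Measure X}
    [μ.IsAddHaarMeasure] {f f' : X → E} {e : X} (hf : Integrable f μ) (hf' : Integrable f' μ)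
    (hderiv : ∀ z, HasLineDerivAt ℝ f (f' z) z e) : ∫ z, f' z ∂μ = 0 := by
  have h := integral_bilinear_hasLineDerivAt_right_eq_neg_left_of_integrable (μ := μ)
    (B := ContinuousLinearMap.lsmul ℝ ℝ) (f := fun _ => 1) (f' := fun _ => 0) (g := f) (g' := f')
    (v := e) (by simp) (by simpa using hf') (by simpa using hf)
    (fun z _ => hasDerivAt_const 0 1) fun z _ => hderiv z
  simpa using h

variable {v : V3 × ℝ → E} {c ε : ℝ}

lemma hasLineDerivAt_delayed (hv : Differentiable ℝ v) (hε : 0 < ε) (p : V3 × ℝ) (i : Fin 3)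
    (z : V3) :
    HasLineDerivAt ℝ (fun z => v (p - (z, c * softNorm ε z)))
      (-(pdS i v (p - (z, c * softNorm ε z))) -
        (c * (z i * (softNorm ε z)⁻¹)) • pdT v (p - (z, c * softNorm ε z))) z
      (Pi.single i 1) := by
  have hline : HasDerivAt (fun t : ℝ => z + t • (Pi.single i 1 : V3)) (Pi.single i 1) 0 := by
    simpa using ((hasDerivAt_id (0 : ℝ)).smul_const (Pi.single i 1 : V3)).const_add z
  have harg := (hline.prodMk ((hasLineDerivAt_softNorm hε i z).const_mul c)).const_sub p
  refine ((hv _).hasFDerivAt.comp_hasDerivAt 0 harg).congr_deriv ?_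
  have hsplit : -((Pi.single i 1 : V3), c * (z i * (softNorm ε z)⁻¹)) =
      -(Pi.single i 1, 0) - (c * (z i * (softNorm ε z)⁻¹)) • ((0 : V3), (1 : ℝ)) := by
    ext <;> simp
  rw [hsplit, map_sub, map_neg, map_smul, pdS_eq_fderiv hv, pdT_eq_fderiv hv]
  simp

/-- The `i`-th component, at displacement `z` from `p`, of the vector field whose divergence theorem
gives Green's representation formula for the wave operator, with the Euclidean norm smoothed at
scale `ε`. -/
def retardedFlux (c ε : ℝ) (v : V3 × ℝ → E) (p : V3 × ℝ) (i : Fin 3) (z : V3) : E :=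
  (z i * (softNorm ε z)⁻¹ ^ 3) • v (p - (z, c * softNorm ε z)) +
    (c * (z i * (softNorm ε z)⁻¹ ^ 2)) • pdT v (p - (z, c * softNorm ε z)) -
    (softNorm ε z)⁻¹ ^ 1 • pdS i v (p - (z, c * softNorm ε z))

/-- The partial derivative of `retardedFlux` in its own direction `i`. -/
def retardedFluxDeriv (c ε : ℝ) (v : V3 × ℝ → E) (p : V3 × ℝ) (i : Fin 3) (z : V3) : E :=
  ((softNorm ε z)⁻¹ ^ 3 - 3 * z i ^ 2 * (softNorm ε z)⁻¹ ^ 5) • v (p - (z, c * softNorm ε z)) +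
    (c * ((softNorm ε z)⁻¹ ^ 2 - 3 * z i ^ 2 * (softNorm ε z)⁻¹ ^ 4)) •
      pdT v (p - (z, c * softNorm ε z)) +
    (-(c ^ 2 * z i ^ 2 * (softNorm ε z)⁻¹ ^ 3)) • pdT (pdT v) (p - (z, c * softNorm ε z)) +
    (softNorm ε z)⁻¹ ^ 1 • pdS i (pdS i v) (p - (z, c * softNorm ε z))

lemma hasLineDerivAt_retardedFlux (hv : IsSource 2 v) (hε : 0 < ε) (p : V3 × ℝ) (i : Fin 3)
    (z : V3) :
    HasLineDerivAt ℝ (retardedFlux c ε v p i) (retardedFluxDeriv c ε v p i z) z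
      (Pi.single i 1) := by
  have hvT : IsSource 1 (pdT v) := hv.pdT (by norm_num)
  have hvS : IsSource 1 (pdS i v) := hv.pdS (by norm_num) i
  have hk (m : ℕ) := hasLineDerivAt_coord_mul_inv_softNorm_pow hε m i z
  have h₁ := hasLineDerivAt_smul (hk 3)
    (hasLineDerivAt_delayed (c := c) (hv.differentiable one_le_two) hε p i z)
  have hck : HasLineDerivAt ℝ (fun z => c * (z i * (softNorm ε z)⁻¹ ^ 2)) _ z (Pi.single i 1) :=
    (hk 2).const_mul c
  have h₂ := hasLineDerivAt_smul hck
    (hasLineDerivAt_delayed (c := c) (hvT.differentiable le_rfl) hε p i z)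
  have h₃ := hasLineDerivAt_smul (hasLineDerivAt_inv_softNorm_pow hε 1 i z)
    (hasLineDerivAt_delayed (c := c) (hvS.differentiable le_rfl) hε p i z)
  refine ((h₁.add h₂).sub h₃).congr_deriv ?_
  rw [pdS_pdT_comm hv.contDiff i, retardedFluxDeriv]
  module

lemma sum_retardedFluxDeriv (hε : 0 < ε) (p : V3 × ℝ) (z : V3) :
    ∑ i, retardedFluxDeriv c ε v p i z =
      (softNorm ε z)⁻¹ ^ 1 • waveOperator c v (p - (z, c * softNorm ε z)) +
      (3 : ℝ) • (ε ^ 2 * (softNorm ε z)⁻¹ ^ 5) • v (p - (z, c * softNorm ε z)) +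
      (3 * c) • (ε ^ 2 * (softNorm ε z)⁻¹ ^ 4) • pdT v (p - (z, c * softNorm ε z)) +
      c ^ 2 • (ε ^ 2 * (softNorm ε z)⁻¹ ^ 3) • pdT (pdT v) (p - (z, c * softNorm ε z)) := by
  have hs := (softNorm_pos hε z).ne'
  have hdot : z 2 ^ 2 = softNorm ε z ^ 2 - ε ^ 2 - z 0 ^ 2 - z 1 ^ 2 := by
    rw [softNorm_sq, dot3_self]
    ring
  simp only [retardedFluxDeriv, waveOperator_eq, Fin.sum_univ_three, hdot]
  match_scalars <;> field_simp <;> ring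

lemma integrable_retardedFlux (hv : IsSource 1 v) (hε : 0 < ε) (p : V3 × ℝ) (i : Fin 3) :
    Integrable (retardedFlux c ε v p i) := by
  have hτ : Continuous fun z => c * softNorm ε z := (continuous_softNorm ε).const_mul c
  have hr := continuous_inv_softNorm_pow hε
  have hz : Continuous fun z : V3 => z i := continuous_apply i
  exact ((hv.integrable_delayed (hz.mul (hr 3)).locallyIntegrable hτ p).add
    ((hv.pdT (m := 0) (by simp)).integrable_delayed
      ((hz.mul (hr 2)).const_mul c).locallyIntegrable hτ p)).sub
    ((hv.pdS (m := 0) (by simp) i).integrable_delayed (hr 1).locallyIntegrable hτ p)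

lemma integrable_retardedFluxDeriv (hv : IsSource 2 v) (hε : 0 < ε) (p : V3 × ℝ) (i : Fin 3) :
    Integrable (retardedFluxDeriv c ε v p i) := by
  have hvT : IsSource 1 (pdT v) := hv.pdT (by norm_num)
  have hvS : IsSource 1 (pdS i v) := hv.pdS (by norm_num) i
  have hτ : Continuous fun z => c * softNorm ε z := (continuous_softNorm ε).const_mul c
  have hr := continuous_inv_softNorm_pow hε
  have hz : Continuous fun z : V3 => z i := continuous_apply i
  refine (((hv.integrable_delayed (Continuous.locallyIntegrable ?_) hτ p).add
    (hvT.integrable_delayed (Continuous.locallyIntegrable ?_) hτ p)).add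
    ((hvT.pdT (m := 0) (by simp)).integrable_delayed (Continuous.locallyIntegrable ?_) hτ p)).add
    ((hvS.pdS (m := 0) (by simp) i).integrable_delayed (hr 1).locallyIntegrable hτ p)
  · exact (hr 3).sub (((hz.pow 2).const_mul 3).mul (hr 5))
  · exact ((hr 2).sub (((hz.pow 2).const_mul 3).mul (hr 4))).const_mul c
  · exact (((hz.pow 2).const_mul (c ^ 2)).mul (hr 3)).neg

lemma integral_sum_retardedFluxDeriv (hv : IsSource 2 v) (hε : 0 < ε) (p : V3 × ℝ) :
    ∫ z, ∑ i, retardedFluxDeriv c ε v p i z = 0 := by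
  rw [integral_finsetSum _ fun i _ => integrable_retardedFluxDeriv hv hε p i]
  exact Finset.sum_eq_zero fun i _ => integral_eq_zero_of_hasLineDerivAt
    (integrable_retardedFlux (hv.of_le one_le_two) hε p i)
    (integrable_retardedFluxDeriv hv hε p i) (hasLineDerivAt_retardedFlux hv hε p i)

/-- Green's representation formula at scale `ε`: as `ε → 0`, the second term tends to `4π v p` and
the last two tend to `0`. -/
theorem delayedConvolution_waveOperator_softNorm (hv : IsSource 2 v) (hε : 0 < ε) (p : V3 × ℝ) :
    delayedConvolution volume (fun z => (softNorm ε z)⁻¹ ^ 1) (fun z => c * softNorm ε z)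
        (waveOperator c v) p +
      (3 : ℝ) • delayedConvolution volume (fun z => ε ^ 2 * (softNorm ε z)⁻¹ ^ 5)
        (fun z => c * softNorm ε z) v p +
      (3 * c) • delayedConvolution volume (fun z => ε ^ 2 * (softNorm ε z)⁻¹ ^ 4)
        (fun z => c * softNorm ε z) (pdT v) p +
      c ^ 2 • delayedConvolution volume (fun z => ε ^ 2 * (softNorm ε z)⁻¹ ^ 3)
        (fun z => c * softNorm ε z) (pdT (pdT v)) p = 0 := by
  have hvT : IsSource 1 (pdT v) := hv.pdT (by norm_num)
  have hvTT : IsSource 0 (pdT (pdT v)) := hvT.pdT (by simp)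
  have hvW : IsSource 0 (waveOperator c v) := hv.waveOperator (by norm_num) c
  have hτ : Continuous fun z => c * softNorm ε z := (continuous_softNorm ε).const_mul c
  have hr := continuous_inv_softNorm_pow hε
  have hr' (m : ℕ) : LocallyIntegrable fun z => ε ^ 2 * (softNorm ε z)⁻¹ ^ m :=
    ((hr m).const_mul (ε ^ 2)).locallyIntegrable
  have hW := hvW.integrable_delayed (μ := volume) (hr 1).locallyIntegrable hτ p
  have h₅ := (hv.integrable_delayed (hr' 5) hτ p).fun_smul (3 : ℝ)
  have h₄ := (hvT.integrable_delayed (hr' 4) hτ p).fun_smul (3 * c)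
  have h₃ := (hvTT.integrable_delayed (hr' 3) hτ p).fun_smul (c ^ 2)
  have hsum := integral_sum_retardedFluxDeriv (c := c) hv hε p
  simp only [sum_retardedFluxDeriv hε] at hsum
  rwa [integral_add ((hW.fun_add h₅).fun_add h₄) h₃, integral_add (hW.fun_add h₅) h₄,
    integral_add hW h₅, integral_smul, integral_smul, integral_smul] at hsum

end RetardedFlux

section Unsmoothing

variable {E : Type*} [NormedAddCommGroup E] [NormedSpace ℝ E] {n : WithTop ℕ∞} {v : V3 × ℝ → E}

lemma tendsto_inv_softNorm_pow (m : ℕ) {z : V3} (hz : z ≠ 0) :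
    Tendsto (fun ε => (softNorm ε z)⁻¹ ^ m) (𝓝[>] 0) (𝓝 ((norm3 z)⁻¹ ^ m)) := by
  have hcont : Continuous fun ε => softNorm ε z :=
    continuous_uncurry_softNorm.comp (.prodMk_left z)
  rw [← softNorm_zero]
  have hne : softNorm 0 z ≠ 0 := softNorm_zero z ▸ (norm3_pos hz).ne'
  exact (((hcont.tendsto 0).inv₀ hne).pow m).mono_left nhdsWithin_le_nhds

lemma delayedConvolution_sq_mul_inv_softNorm_pow_five (c : ℝ) {ε : ℝ} (hε : 0 < ε)
    (v : V3 × ℝ → E) (p : V3 × ℝ) :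
    delayedConvolution volume (fun z => ε ^ 2 * (softNorm ε z)⁻¹ ^ 5)
        (fun z => c * softNorm ε z) v p =
      ∫ w : V3, (softNorm 1 w)⁻¹ ^ 5 • v (p - (ε • w, c * (ε * softNorm 1 w))) := by
  have hscale := Measure.integral_comp_smul_of_nonneg volume (hR := hε.le) (fun z : V3 =>
    (ε ^ 2 * (softNorm ε z)⁻¹ ^ 5) • v (p - (z, c * softNorm ε z))) ε
  rw [Module.finrank_fin_fun, eq_inv_smul_iff₀ (pow_pos hε 3).ne', ← integral_smul] at hscale
  rw [delayedConvolution, ← hscale]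
  congr with w
  rw [smul_smul, softNorm_smul hε.le]
  congr 1
  have := (softNorm_pos one_pos w).ne'
  field_simp

namespace IsSource

lemma tendsto_delayedConvolution_softNorm (hv : IsSource n v) (c : ℝ) (p : V3 × ℝ)
    {k : ℝ → V3 → ℝ} {k₀ : V3 → ℝ} {m : ℕ} (hm : m < 3) (hk : ∀ ε, Measurable (k ε))
    (hle : ∀ ε > 0, ∀ z ≠ 0, ‖k ε z‖ ≤ (norm3 z)⁻¹ ^ m)
    (hk₀ : ∀ z ≠ 0, Tendsto (fun ε => k ε z) (𝓝[>] 0) (𝓝 (k₀ z))) :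
    Tendsto (fun ε => delayedConvolution volume (k ε) (fun z => c * softNorm ε z) v p) (𝓝[>] 0)
      (𝓝 (delayedConvolution volume k₀ (fun z => c * norm3 z) v p)) := by
  simp only [← softNorm_zero] at hle ⊢
  refine hv.tendsto_delayedConvolution nhdsWithin_le_nhds (p := fun _ => p)
    (τ := fun ε z => c * softNorm ε z) continuous_const (continuous_uncurry_softNorm.const_mul c)
    (fun ε => (hk ε).aestronglyMeasurable) (locallyIntegrable_inv_norm3_pow hm) ?_
    (ae_ne_zero.mono hk₀)
  filter_upwards [self_mem_nhdsWithin] with ε hε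
  filter_upwards [ae_ne_zero] with z hz
  simpa only [softNorm_zero] using hle ε hε z hz

lemma tendsto_delayedConvolution_inv_softNorm (hv : IsSource n v) (c : ℝ) (p : V3 × ℝ) :
    Tendsto (fun ε => delayedConvolution volume (fun z => (softNorm ε z)⁻¹ ^ 1)
        (fun z => c * softNorm ε z) v p) (𝓝[>] 0)
      (𝓝 (delayedConvolution volume (fun z => (norm3 z)⁻¹ ^ 1) (fun z => c * norm3 z) v p)) := by
  refine hv.tendsto_delayedConvolution_softNorm c p (m := 1) (by norm_num)
    (fun ε => (continuous_softNorm ε).measurable.inv.pow_const 1) (fun ε hε z hz => ?_)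
    fun z hz => tendsto_inv_softNorm_pow 1 hz
  rw [pow_one, pow_one, norm_of_nonneg (inv_pos.2 (softNorm_pos hε z)).le]
  exact inv_softNorm_le_inv_norm3 ε hz

lemma tendsto_delayedConvolution_sq_mul_inv_softNorm_pow (hv : IsSource n v) (c : ℝ)
    (p : V3 × ℝ) {m : ℕ} (hm : m < 3) :
    Tendsto (fun ε => delayedConvolution volume (fun z => ε ^ 2 * (softNorm ε z)⁻¹ ^ (m + 2))
      (fun z => c * softNorm ε z) v p) (𝓝[>] 0) (𝓝 0) := by
  have h0 : delayedConvolution volume 0 (fun z => c * norm3 z) v p = 0 := by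
    simp [delayedConvolution]
  rw [← h0]
  refine hv.tendsto_delayedConvolution_softNorm c p hm
    (fun ε => ((continuous_softNorm ε).measurable.inv.pow_const _).const_mul _)
    (fun ε hε z hz => ?_) fun z hz => ?_
  · have hr := inv_pos.2 (softNorm_pos hε z)
    have hεr : ε * (softNorm ε z)⁻¹ ≤ 1 :=
      mul_inv_le_one_of_le₀ (le_softNorm ε z) (softNorm_pos hε z).le
    rw [norm_of_nonneg (by positivity)]
    calc ε ^ 2 * (softNorm ε z)⁻¹ ^ (m + 2)
        = (ε * (softNorm ε z)⁻¹) ^ 2 * (softNorm ε z)⁻¹ ^ m := by ring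
      _ ≤ 1 ^ 2 * (norm3 z)⁻¹ ^ m := by
        gcongr ?_ ^ 2 * ?_ ^ m
        exact inv_softNorm_le_inv_norm3 ε hz
      _ = (norm3 z)⁻¹ ^ m := by ring
  · have hε : Tendsto (fun ε : ℝ => ε ^ 2) (𝓝[>] 0) (𝓝 (0 ^ 2)) :=
      (tendsto_id.pow 2).mono_left nhdsWithin_le_nhds
    simpa using hε.mul (tendsto_inv_softNorm_pow (m + 2) hz)

lemma tendsto_integral_inv_softNorm_one_pow_five_smul (hv : IsSource n v) (c : ℝ) (p : V3 × ℝ) :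
    Tendsto
      (fun ε : ℝ => ∫ w : V3, (softNorm 1 w)⁻¹ ^ 5 • v (p - (ε • w, c * (ε * softNorm 1 w))))
      (𝓝[>] 0) (𝓝 (∫ w : V3, (softNorm 1 w)⁻¹ ^ 5 • v p)) := by
  obtain ⟨M, hM, B, -, hle⟩ := hv.exists_norm_le_indicator (isCompact_Icc (a := (0 : ℝ)) (b := 1))
    (p := fun _ => p) continuous_const (τ := fun ε z => c * softNorm ε z)
    (continuous_uncurry_softNorm.const_mul c)
  refine tendsto_integral_filter_of_dominated_convergence (fun w => (softNorm 1 w)⁻¹ ^ 5 * M)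
    (Eventually.of_forall fun ε => ?_) ?_
    (integrable_inv_softNorm_one_pow_five.mul_const M) (Eventually.of_forall fun w => ?_)
  · have hs := continuous_softNorm 1
    have hcont : Continuous fun w : V3 => v (p - (ε • w, c * (ε * softNorm 1 w))) :=
      hv.continuous.comp (by fun_prop)
    exact ((continuous_inv_softNorm_pow one_pos 5).smul hcont).aestronglyMeasurable
  · filter_upwards [Ioo_mem_nhdsGT one_pos] with ε hε
    refine Eventually.of_forall fun w => ?_
    have hw := pow_pos (inv_pos.2 (softNorm_pos one_pos w)) 5
    rw [norm_smul, norm_of_nonneg hw.le, ← softNorm_smul hε.1.le]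
    gcongr
    exact (hle ε (Ioo_subset_Icc_self hε) (ε • w)).trans (indicator_le_self' (fun _ _ => hM) _)
  · have hcont : Continuous fun ε : ℝ => v (p - (ε • w, c * (ε * softNorm 1 w))) :=
      hv.continuous.comp (by fun_prop)
    have h := ((hcont.tendsto 0).mono_left (nhdsWithin_le_nhds (s := Ioi 0))).const_smul
      ((softNorm 1 w)⁻¹ ^ 5)
    simpa only [zero_smul, zero_mul, mul_zero, Prod.mk_zero_zero, sub_zero] using h

theorem tendsto_delayedConvolution_sq_mul_inv_softNorm_pow_five [CompleteSpace E]
    (hv : IsSource n v) (c : ℝ) (p : V3 × ℝ) :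
    Tendsto (fun ε => delayedConvolution volume (fun z => ε ^ 2 * (softNorm ε z)⁻¹ ^ 5)
      (fun z => c * softNorm ε z) v p) (𝓝[>] 0) (𝓝 ((4 * π / 3) • v p)) := by
  have hlim := hv.tendsto_integral_inv_softNorm_one_pow_five_smul c p
  rw [integral_smul_const, integral_inv_softNorm_one_pow_five] at hlim
  refine hlim.congr' ?_
  filter_upwards [self_mem_nhdsWithin] with ε hε
  exact (delayedConvolution_sq_mul_inv_softNorm_pow_five c hε v p).symm

end IsSource

end Unsmoothing

section RetardedPotential

variable {E : Type*} [NormedAddCommGroup E] [NormedSpace ℝ E] {c : ℝ} {v : V3 × ℝ → E}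

/-- The retarded potential `∫ |x - y|⁻¹ v(y, t - c |x - y|) dy` of the density `v`, for waves of
slowness `c`; the advanced potential when `c < 0` and the Newtonian potential when `c = 0`. -/
def retardedPotential (c : ℝ) (v : V3 × ℝ → E) (p : V3 × ℝ) : E :=
  ∫ y, (norm3 (p.1 - y))⁻¹ • v (y, p.2 - c * norm3 (p.1 - y))

lemma retardedPotential_eq_delayedConvolution (c : ℝ) (v : V3 × ℝ → E) :
    retardedPotential c v =
      delayedConvolution volume (fun z => (norm3 z)⁻¹ ^ 1) (fun z => c * norm3 z) v := by
  funext p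
  rw [retardedPotential, ← integral_sub_left_eq_self _ volume p.1]
  simp [delayedConvolution, Prod.sub_def]

theorem retardedPotential_waveOperator [CompleteSpace E] (hv : IsSource 2 v) (p : V3 × ℝ) :
    retardedPotential c (waveOperator c v) p = -((4 * π) • v p) := by
  have hvW : IsSource 0 (waveOperator c v) := hv.waveOperator (by norm_num) c
  have hvT : IsSource 1 (pdT v) := hv.pdT (by norm_num)
  have hvTT : IsSource 0 (pdT (pdT v)) := hvT.pdT (by simp)
  have hlim := (((hvW.tendsto_delayedConvolution_inv_softNorm c p).add
    ((hv.tendsto_delayedConvolution_sq_mul_inv_softNorm_pow_five c p).const_smul (3 : ℝ))).add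
    ((hvT.tendsto_delayedConvolution_sq_mul_inv_softNorm_pow c p (m := 2) (by norm_num)).const_smul
      (3 * c))).add
    ((hvTT.tendsto_delayedConvolution_sq_mul_inv_softNorm_pow c p (m := 1) (by norm_num)).const_smul
      (c ^ 2))
  have hzero := tendsto_nhds_unique_of_eventuallyEq hlim tendsto_const_nhds
    (eventually_nhdsWithin_of_forall fun ε hε =>
      delayedConvolution_waveOperator_softNorm (c := c) hv hε p)
  rw [← retardedPotential_eq_delayedConvolution, smul_zero, smul_zero, add_zero, add_zero,
    smul_smul, mul_div_cancel₀ _ three_ne_zero] at hzero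
  exact eq_neg_of_add_eq_zero_left hzero

theorem retarded_vector_potential_wave_equation_general [CompleteSpace E] (c : ℝ) {n : ℕ∞}
    (hn : 2 ≤ n) (hv : IsSource n v) :
    ContDiff ℝ n (retardedPotential c v) ∧
    ∀ p : V3 × ℝ,
      lap (retardedPotential c v) p - c ^ 2 • pdT (pdT (retardedPotential c v)) p =
        -((4 * π) • v p) := by
  have hk : LocallyIntegrable fun z => (norm3 z)⁻¹ ^ 1 :=
    locallyIntegrable_inv_norm3_pow (by norm_num)
  have hτ : Continuous fun z => c * norm3 z := continuous_norm3.const_mul c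
  have hv2 : IsSource 2 v := hv.of_le (WithTop.coe_le_coe.2 hn)
  refine ⟨?_, fun p => ?_⟩
  · rw [retardedPotential_eq_delayedConvolution]
    exact hv.contDiff_delayedConvolution hk hτ
  · calc waveOperator c (retardedPotential c v) p = retardedPotential c (waveOperator c v) p := by
          simp only [retardedPotential_eq_delayedConvolution]
          exact waveOperator_delayedConvolution c hv2 hk hτ p
      _ = -((4 * π) • v p) := retardedPotential_waveOperator hv2 p

lemma Aret_eq_retardedPotential (C μ₀ : ℝ) (j : V3 × ℝ → V3) :
    Aret C μ₀ j = retardedPotential C⁻¹ fun q => (μ₀ / (4 * π)) • j q := by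
  funext p
  simp only [Aret, retardedPotential, smul_comm _ (μ₀ / (4 * π)), integral_smul, div_eq_inv_mul _ C]

end RetardedPotential

/-- The retarded vector potential is twice differentiable and satisfies the
inhomogeneous wave equation `ΔA − (1/C²) ∂²A/∂t² = −μ₀ j`. -/
theorem retarded_vector_potential_wave_equation
    (C μ₀ : ℝ) (hC : 0 < C) (hμ : 0 < μ₀)
    (j : V3 × ℝ → V3) (hj : ContDiff ℝ (⊤ : ℕ∞) j)
    (K : Set V3) (hK : IsCompact K)
    (hsupp : ∀ t : ℝ, (Function.support fun y => j (y, t)) ⊆ K) :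
    ContDiff ℝ (2 : ℕ∞) (Aret C μ₀ j) ∧
    ∀ p : V3 × ℝ,
      lap (Aret C μ₀ j) p - (1 / C ^ 2) • pdT (pdT (Aret C μ₀ j)) p = -(μ₀ • j p) := by
  have hsource : IsSource (2 : ℕ∞) j := ⟨hj.of_le (mod_cast le_top), K, hK, fun x hx t =>
    Function.notMem_support.1 fun h => hx (hsupp t h)⟩
  have h := retarded_vector_potential_wave_equation_general C⁻¹ le_rfl
    (hsource.const_smul (μ₀ / (4 * π)))
  simpa [Aret_eq_retardedPotential, smul_smul, mul_div_cancel₀, pi_ne_zero] using h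
end
end

section
/- (Maxwell's invariance theorem.) Let A : ℝ³ × ℝ → ℝ³ and ψ : ℝ³ × ℝ → ℝ be smooth, and let x̄ : ℝ → ℝ³ be differentiable with derivative x̄'. Define A'(x',t) = A(x' + x̄(t), t) and ψ'(x',t) = ψ(x' + x̄(t), t) − x̄'(t)·A'(x',t). For v ∈ ℝ³ define the electromotive intensity ℰ[A,ψ](x,v,t) = v × (∇×A)(x,t) − ∂A/∂t(x,t) − ∇ψ(x,t). Then for every t ∈ ℝ, every x' ∈ ℝ³ and every v' ∈ ℝ³, setting x = x' + x̄(t) and v = v' + x̄'(t), one has ℰ[A',ψ'](x',v',t) = ℰ[A,ψ](x,v,t). -/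
noncomputable section

open MeasureTheory Real

/-- The electromotive intensity `ℰ[A,ψ](x,v,t) = v × (∇×A) − ∂A/∂t − ∇ψ`. -/
def emf (A : V3 × ℝ → V3) (ψ : V3 × ℝ → ℝ) (x v : V3) (t : ℝ) : V3 :=
  cross3 v (curl A (x, t)) - pdT A (x, t) - grad ψ (x, t)

/-!
For a fixed vector `w`, the identity `w × (∇ × A) = ∇(w · A) - (w · ∇)A` holds. In the moving
coordinates, `∂/∂t` acquires the convective term `(x̄' · ∇)A`, whereas the correction `-x̄' · A'` to
the potential contributes `-∇(x̄' · A)` to its gradient. Together these account for exactly the term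
`x̄' × (∇ × A)` by which the velocity shift changes the magnetic part of the intensity.
-/

/-- The field `f` in the coordinates of a frame translated along `c`, without change of components:
its value at `(x, t)` is that of `f` at the point whose inertial coordinates are `(x + c t, t)`. -/
def comoving {F : Type*} (c : ℝ → V3) (f : V3 × ℝ → F) (p : V3 × ℝ) : F :=
  f (p.1 + c p.2, p.2)

theorem cross3_add_left (a b c : V3) : cross3 (a + b) c = cross3 a c + cross3 b c :=
  LinearMap.map_add₂ crossProduct a b c

section Derivatives

variable {F : Type*} [NormedAddCommGroup F] [NormedSpace ℝ F]

theorem differentiableAt_spatial {f : V3 × ℝ → F} {p : V3 × ℝ} (hf : DifferentiableAt ℝ f p) :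
    DifferentiableAt ℝ (fun y => f (y, p.2)) p.1 :=
  hf.comp p.1 (hasFDerivAt_prodMk_left p.1 p.2).differentiableAt

theorem dirS_eq_fderiv {f : V3 × ℝ → F} {p : V3 × ℝ} (hf : DifferentiableAt ℝ f p) (a : V3) :
    dirS a f p = fderiv ℝ f p (a, 0) := by
  have slice_deriv : HasFDerivAt (fun y => f (y, p.2))
      ((fderiv ℝ f p).comp (.inl ℝ V3 ℝ)) p.1 :=
    HasFDerivAt.comp (g := f) p.1 hf.hasFDerivAt (hasFDerivAt_prodMk_left p.1 p.2)
  exact DFunLike.congr_fun slice_deriv.fderiv a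

theorem pdT_eq_fderiv_s8 {f : V3 × ℝ → F} {p : V3 × ℝ} (hf : DifferentiableAt ℝ f p) :
    pdT f p = fderiv ℝ f p (0, 1) :=
  (hf.hasFDerivAt.comp_hasDerivAt p.2 (hasFDerivAt_prodMk_right p.1 p.2).hasDerivAt).deriv

theorem dirS_eq_sum_pdS (a : V3) (f : V3 × ℝ → F) (p : V3 × ℝ) :
    dirS a f p = ∑ i, a i • pdS i f p := by
  simp only [dirS, pdS, ← map_smul, ← map_sum]
  rw [← pi_eq_sum_univ' a]

theorem grad_sub {φ ψ : V3 × ℝ → ℝ} {p : V3 × ℝ}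
    (hφ : DifferentiableAt ℝ (fun y => φ (y, p.2)) p.1)
    (hψ : DifferentiableAt ℝ (fun y => ψ (y, p.2)) p.1) :
    grad (fun q => φ q - ψ q) p = grad φ p - grad ψ p := by
  ext i
  simp only [grad, pdS, fderiv_fun_sub hφ hψ, sub_apply, Pi.sub_apply]

variable {A : V3 × ℝ → V3} {p : V3 × ℝ}

theorem dirS_apply (hA : DifferentiableAt ℝ (fun y => A (y, p.2)) p.1) (a : V3) (j : Fin 3) :
    dirS a A p j = dirS a (fun q => A q j) p := by
  simp only [dirS, fderiv_apply hA, ContinuousLinearMap.comp_apply, ContinuousLinearMap.proj_apply]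

theorem grad_dot3_apply (hA : DifferentiableAt ℝ (fun y => A (y, p.2)) p.1) (a : V3) (i : Fin 3) :
    grad (fun q => dot3 a (A q)) p i = ∑ j, a j * pdS i (fun q => A q j) p := by
  have hAj := differentiableAt_pi.1 hA
  simp only [grad, pdS, dot3]
  rw [fderiv_fun_sum fun j _ => (hAj j).const_mul (a j)]
  simp only [fderiv_const_mul (hAj _), sum_apply, smul_apply, smul_eq_mul]

theorem cross3_curl (hA : DifferentiableAt ℝ (fun y => A (y, p.2)) p.1) (a : V3) :
    cross3 a (curl A p) = grad (fun q => dot3 a (A q)) p - dirS a A p := by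
  ext k
  rw [Pi.sub_apply, grad_dot3_apply hA, dirS_apply hA, dirS_eq_sum_pdS]
  simp only [cross3, curl, Fin.sum_univ_three, smul_eq_mul]
  fin_cases k
  all_goals
    simp only [Fin.zero_eta, Fin.mk_one, Fin.reduceFinMk, Matrix.cons_val]
    ring

end Derivatives

section Comoving

variable {F : Type*} [NormedAddCommGroup F] [NormedSpace ℝ F]

theorem pdS_comoving (i : Fin 3) (c : ℝ → V3) (f : V3 × ℝ → F) (x : V3) (t : ℝ) :
    pdS i (comoving c f) (x, t) = pdS i f (x + c t, t) :=
  DFunLike.congr_fun (fderiv_comp_add_right (f := fun y => f (y, t)) (c t)) (Pi.single i 1)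

theorem grad_comoving (c : ℝ → V3) (ψ : V3 × ℝ → ℝ) (x : V3) (t : ℝ) :
    grad (comoving c ψ) (x, t) = grad ψ (x + c t, t) :=
  funext fun i => pdS_comoving i c ψ x t

theorem curl_comoving (c : ℝ → V3) (A : V3 × ℝ → V3) (x : V3) (t : ℝ) :
    curl (comoving c A) (x, t) = curl A (x + c t, t) := by
  have pdS_component (i j : Fin 3) :
      pdS i (fun q => comoving c A q j) (x, t) = pdS i (fun q => A q j) (x + c t, t) :=
    pdS_comoving i c (fun q => A q j) x t
  simp only [curl, pdS_component]

theorem pdT_comoving {c : ℝ → V3} {f : V3 × ℝ → F} {x w : V3} {t : ℝ}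
    (hf : DifferentiableAt ℝ f (x + c t, t)) (hc : HasDerivAt c w t) :
    pdT (comoving c f) (x, t) = pdT f (x + c t, t) + dirS w f (x + c t, t) := by
  have path_deriv : HasDerivAt (fun s => (x + c s, s)) (w, (1 : ℝ)) t :=
    (hc.const_add x).prodMk (hasDerivAt_id' t)
  have total_deriv : pdT (comoving c f) (x, t) = fderiv ℝ f (x + c t, t) (w, 1) :=
    (hf.hasFDerivAt.comp_hasDerivAt_of_eq t path_deriv rfl).deriv
  rw [total_deriv, pdT_eq_fderiv_s8 hf, dirS_eq_fderiv hf, ← map_add, Prod.mk_add_mk, zero_add,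
    add_zero]

theorem grad_comoving_sub_dot3 {A : V3 × ℝ → V3} {ψ : V3 × ℝ → ℝ} {c : ℝ → V3} {x : V3} {t : ℝ}
    (hA : DifferentiableAt ℝ (fun y => A (y, t)) (x + c t))
    (hψ : DifferentiableAt ℝ (fun y => ψ (y, t)) (x + c t)) (w : ℝ → V3) :
    grad (fun p => comoving c ψ p - dot3 (w p.2) (comoving c A p)) (x, t) =
      grad ψ (x + c t, t) - grad (fun q => dot3 (w t) (A q)) (x + c t, t) := by
  have hAw : DifferentiableAt ℝ (fun y => dot3 (w t) (A (y, t))) (x + c t) :=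
    .fun_sum fun j _ => (differentiableAt_pi.1 hA j).const_mul (w t j)
  -- At the fixed time `t` the coefficient `w` is the constant `w t`.
  calc grad (fun p => comoving c ψ p - dot3 (w p.2) (comoving c A p)) (x, t)
      = grad (comoving c fun q => ψ q - dot3 (w t) (A q)) (x, t) := rfl
    _ = grad (fun q => ψ q - dot3 (w t) (A q)) (x + c t, t) := grad_comoving c _ x t
    _ = grad ψ (x + c t, t) - grad (fun q => dot3 (w t) (A q)) (x + c t, t) := grad_sub hψ hAw

end Comoving

theorem maxwell_invariance_general {A : V3 × ℝ → V3} {ψ : V3 × ℝ → ℝ} {xb xb' : ℝ → V3}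
    {t : ℝ} {x' : V3} (hA : DifferentiableAt ℝ A (x' + xb t, t))
    (hψ : DifferentiableAt ℝ (fun y => ψ (y, t)) (x' + xb t))
    (hxb : HasDerivAt xb (xb' t) t) (v' : V3) :
    emf (comoving xb A) (fun p => comoving xb ψ p - dot3 (xb' p.2) (comoving xb A p)) x' v' t =
      emf A ψ (x' + xb t) (v' + xb' t) t := by
  have hA_space : DifferentiableAt ℝ (fun y => A (y, t)) (x' + xb t) :=
    differentiableAt_spatial hA
  simp only [emf]
  rw [curl_comoving, pdT_comoving hA hxb, grad_comoving_sub_dot3 hA_space hψ,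
    cross3_add_left, cross3_curl (p := (x' + xb t, t)) hA_space (xb' t)]
  abel

/-- **Maxwell's invariance theorem**: the electromotive intensity is invariant
under the time-dependent translation `x = x' + x̄(t)`, `v = v' + x̄'(t)`, with
`A'(x',t) = A(x'+x̄(t),t)` and `ψ'(x',t) = ψ(x'+x̄(t),t) − x̄'(t)·A'(x',t)`. -/
theorem maxwell_invariance
    (A : V3 × ℝ → V3) (ψ : V3 × ℝ → ℝ)
    (hA : ContDiff ℝ (⊤ : ℕ∞) A) (hψ : ContDiff ℝ (⊤ : ℕ∞) ψ)
    (xb xb' : ℝ → V3) (hxb : ∀ t : ℝ, HasDerivAt xb (xb' t) t)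
    (A' : V3 × ℝ → V3) (hA' : A' = fun p => A (p.1 + xb p.2, p.2))
    (ψ' : V3 × ℝ → ℝ) (hψ' : ψ' = fun p => ψ (p.1 + xb p.2, p.2) - dot3 (xb' p.2) (A' p)) :
    ∀ (t : ℝ) (x' v' : V3),
      emf A' ψ' x' v' t = emf A ψ (x' + xb t) (v' + xb' t) t := by
  subst hA' hψ'
  intro t x' v'
  exact maxwell_invariance_general (hA.differentiable (by simp) _)
    (differentiableAt_spatial (hψ.differentiable (by simp) (x' + xb t, t))) (hxb t) v'
end
end
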